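/- Let Z ⊆ ℝ^N be an open set, let m ≥ 1, and let Q be the differential operator Qu = ∑_{|α|≤m} a_α(z) D^α u with coefficients a_α ∈ C^∞(Z;ℂ), where D = −i∂; let q(z,ζ) = ∑_{|α|=m} a_α(z) ζ^α (for ζ ∈ ℂ^N) be its principal symbol. Suppose there exist a real-valued smooth weight function φ on Z, a constant C > 0, τ₁ > 0, a multi-index α₀ with 0 ≤ |α₀| ≤ m, and δ ≥ 0 such that τ^{m−1−|α₀|+δ} ‖e^{τφ} D^{α₀} u‖_{L²} ≤ C ‖e^{τφ} Q u‖_{L²} for all τ ≥ τ₁ and all u ∈ C_c^∞(ℝ^N) with supp(u) ⊂ Z. If there exist z₀ ∈ Z, ζ₀ ∈ ℝ^N and τ₀ > 0 such that, setting θ₀ := ζ₀ + i τ₀ ∇φ(z₀) ∈ ℂ^N, one has θ₀^{α₀} ≠ 0, q(z₀, θ₀) = 0, and all first-order partial derivatives ∂_{z_j} q(z₀, θ₀) and ∂_{ζ_j} q(z₀, θ₀), 1 ≤ j ≤ N, vanish, then δ = 0. -/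

import Mathlib

open MeasureTheory

/-- Partial derivative in direction `j` of a complex-valued function on `ℝ^N`. -/
noncomputable def pderivC {N : ℕ} (j : Fin N) (f : (Fin N → ℝ) → ℂ) : (Fin N → ℝ) → ℂ :=
  fun z => fderiv ℝ f z (Pi.single j 1)

/-- Iterated multi-index partial derivative `∂^α`. -/
noncomputable def mderivC {N : ℕ} (α : Fin N → ℕ) (f : (Fin N → ℝ) → ℂ) : (Fin N → ℝ) → ℂ :=
  (List.finRange N).foldr (fun j g => (pderivC j)^[α j] g) f

/-- `D^α = (-i)^{|α|} ∂^α`. -/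
noncomputable def DopC {N : ℕ} (α : Fin N → ℕ) (f : (Fin N → ℝ) → ℂ) : (Fin N → ℝ) → ℂ :=
  fun z => (-Complex.I) ^ (∑ j, α j) * mderivC α f z
section

open Complex Filter Topology

/-- The word (list of directions) attached to a multi-index. -/
def wordOf {N : ℕ} (α : Fin N → ℕ) : List (Fin N) :=
  (List.finRange N).flatMap (fun j => List.replicate (α j) j)

lemma foldr_replicate_aux {A B : Type*} (f : A → B → B) (n : ℕ) (x : A) (b : B) :
    (List.replicate n x).foldr f b = (f x)^[n] b := by
  induction n with
  | zero => rfl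
  | succ n ih => rw [List.replicate_succ, List.foldr_cons, ih, Function.iterate_succ_apply']

lemma mderivC_eq_word {N : ℕ} (α : Fin N → ℕ) (f : (Fin N → ℝ) → ℂ) :
    mderivC α f = (wordOf α).foldr pderivC f := by
  unfold mderivC wordOf
  induction List.finRange N with
  | nil => rfl
  | cons a l ih =>
    rw [List.foldr_cons, List.flatMap_cons, List.foldr_append, ih, foldr_replicate_aux]

lemma prod_word {N : ℕ} (α : Fin N → ℕ) (ζ : Fin N → ℂ) :
    ((wordOf α).map ζ).prod = ∏ j, ζ j ^ α j := by
  have h : ∀ l : List (Fin N), ((l.flatMap (fun j => List.replicate (α j) j)).map ζ).prod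
      = (l.map (fun j => ζ j ^ α j)).prod := by
    intro l
    induction l with
    | nil => rfl
    | cons a l ih =>
      rw [List.flatMap_cons, List.map_append, List.prod_append, ih]; simp
  unfold wordOf
  rw [h, Fin.prod_univ_def]

lemma length_word {N : ℕ} (α : Fin N → ℕ) : (wordOf α).length = ∑ j, α j := by
  have h : ∀ l : List (Fin N), (l.flatMap (fun j => List.replicate (α j) j)).length
      = (l.map (fun j => α j)).sum := by
    intro l
    induction l with
    | nil => rfl
    | cons a l ih =>
      rw [List.flatMap_cons, List.length_append, ih]; simp
  unfold wordOf
  rw [h, Fin.sum_univ_def]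

/-- Rescaled conjugated derivative. -/
noncomputable def Mop {N : ℕ} (θ : Fin N → ℂ) (ε : ℝ) (j : Fin N) (g : (Fin N → ℝ) → ℂ) :
    (Fin N → ℝ) → ℂ :=
  fun Y => θ j * g Y - I * ε * pderivC j g Y

lemma contDiff_pderivC {N : ℕ} (j : Fin N) {f : (Fin N → ℝ) → ℂ}
    (hf : ContDiff ℝ (⊤ : ℕ∞) f) : ContDiff ℝ (⊤ : ℕ∞) (pderivC j f) := by
  unfold pderivC
  exact (hf.fderiv_right (m := (⊤ : ℕ∞)) (by simp)).clm_apply contDiff_const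

lemma contDiff_pderivC_param {N : ℕ} (j : Fin N) {H : ℝ → (Fin N → ℝ) → ℂ}
    (hH : ContDiff ℝ (⊤ : ℕ∞) (fun p : ℝ × (Fin N → ℝ) => H p.1 p.2)) :
    ContDiff ℝ (⊤ : ℕ∞) (fun p : ℝ × (Fin N → ℝ) => pderivC j (H p.1) p.2) := by
  unfold pderivC
  refine ContDiff.clm_apply ?_ contDiff_const
  refine ContDiff.fderiv (m := (⊤ : ℕ∞)) (n := (⊤ : ℕ∞)) (f := fun p : ℝ × (Fin N → ℝ) => H p.1) ?_ contDiff_snd (by simp)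
  exact hH.comp ((contDiff_fst.comp contDiff_fst).prodMk contDiff_snd)

lemma contDiff_slice {N : ℕ} {H : ℝ → (Fin N → ℝ) → ℂ}
    (hH : ContDiff ℝ (⊤ : ℕ∞) (fun p : ℝ × (Fin N → ℝ) => H p.1 p.2)) (ε : ℝ) :
    ContDiff ℝ (⊤ : ℕ∞) (H ε) :=
  hH.comp (contDiff_const.prodMk contDiff_id)

lemma contDiff_Mop_word {N : ℕ} (θ : Fin N → ℂ) {χ : (Fin N → ℝ) → ℂ}
    (hχ : ContDiff ℝ (⊤ : ℕ∞) χ) (w : List (Fin N)) :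
    ContDiff ℝ (⊤ : ℕ∞) (fun p : ℝ × (Fin N → ℝ) => w.foldr (Mop θ p.1) χ p.2) := by
  induction w with
  | nil => exact hχ.comp contDiff_snd
  | cons l w ih =>
    simp only [List.foldr_cons, Mop]
    have h := contDiff_pderivC_param l (H := fun ε => w.foldr (Mop θ ε) χ) ih
    have h2 : ContDiff ℝ (⊤ : ℕ∞) (fun p : ℝ × (Fin N → ℝ) => (p.1 : ℂ)) :=
      ofRealCLM.contDiff.comp contDiff_fst
    exact (contDiff_const.mul ih).sub ((contDiff_const.mul h2).mul h)

lemma Mop_word_const {N : ℕ} (θ : Fin N → ℂ) (ε : ℝ) {χ : (Fin N → ℝ) → ℂ} {c : ℂ}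
    {Y : Fin N → ℝ} (h : χ =ᶠ[𝓝 Y] fun _ => c) (w : List (Fin N)) :
    w.foldr (Mop θ ε) χ =ᶠ[𝓝 Y] fun _ => (w.map θ).prod * c := by
  induction w with
  | nil => simpa using h
  | cons l w ih =>
    have h2 := ih.fderiv (𝕜 := ℝ)
    filter_upwards [ih, h2] with y hy hy2
    simp only [List.foldr_cons, Mop, pderivC, hy, hy2]
    simp [mul_assoc]

lemma Mop_word_expand {N : ℕ} (θ : Fin N → ℂ) {χ : (Fin N → ℝ) → ℂ}
    (hχ : ContDiff ℝ (⊤ : ℕ∞) χ) (w : List (Fin N)) :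
    ∃ (b : Fin N → ℂ) (H : ℝ → (Fin N → ℝ) → ℂ),
      (∀ j, HasDerivAt (fun t : ℂ => (w.map (Function.update θ j t)).prod) (b j) (θ j)) ∧
      ContDiff ℝ (⊤ : ℕ∞) (fun p : ℝ × (Fin N → ℝ) => H p.1 p.2) ∧
      ∀ (ε : ℝ) (Y : Fin N → ℝ), w.foldr (Mop θ ε) χ Y =
        (w.map θ).prod * χ Y + ε * ∑ j, b j * (-I * pderivC j χ Y) + ε ^ 2 * H ε Y := by
  induction w with
  | nil =>
    refine ⟨0, 0, ?_, ?_, ?_⟩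
    · intro j; simpa using hasDerivAt_const (θ j) (1 : ℂ)
    · exact contDiff_const
    · intro ε Y; simp
  | cons l w ih =>
    obtain ⟨b, H, hb, hH, hexp⟩ := ih
    refine ⟨fun j => θ l * b j + (if j = l then (w.map θ).prod else 0),
      fun ε Y => θ l * H ε Y - I * (∑ j, b j * (-I * pderivC l (pderivC j χ) Y))
        - I * ε * pderivC l (H ε) Y, ?_, ?_, ?_⟩
    · intro j
      have h1 : HasDerivAt (fun t : ℂ => Function.update θ j t l) (if j = l then 1 else 0) (θ j) := by
        by_cases hjl : j = l
        · subst hjl; simpa using hasDerivAt_id' (θ j)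
        · have : ∀ t : ℂ, Function.update θ j t l = θ l := fun t =>
            Function.update_of_ne (Ne.symm hjl) _ _
          simp only [this, if_neg hjl]; exact hasDerivAt_const _ _
      have h2 := h1.mul (hb j)
      simp only [List.map_cons, List.prod_cons]
      refine HasDerivAt.congr_deriv h2 ?_
      simp only [Function.update_eq_self]
      split_ifs <;> ring
    · have h2 : ContDiff ℝ (⊤ : ℕ∞) (fun p : ℝ × (Fin N → ℝ) => (p.1 : ℂ)) :=
        ofRealCLM.contDiff.comp contDiff_fst
      refine ((contDiff_const.mul hH).sub (contDiff_const.mul ?_)).sub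
        ((contDiff_const.mul h2).mul (contDiff_pderivC_param l hH))
      refine ContDiff.sum fun j _ => contDiff_const.mul (contDiff_const.mul ?_)
      exact (contDiff_pderivC l (contDiff_pderivC j hχ)).comp contDiff_snd
    · intro ε Y
      have hf : w.foldr (Mop θ ε) χ = fun Y => (w.map θ).prod * χ Y
        + ε * ∑ j, b j * (-I * pderivC j χ Y) + ε ^ 2 * H ε Y := funext (hexp ε)
      have hχd : DifferentiableAt ℝ χ Y := (hχ.differentiable (by simp)) Y
      have hHd : DifferentiableAt ℝ (H ε) Y := ((contDiff_slice hH ε).differentiable (by simp)) Y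
      have hpd : ∀ j, DifferentiableAt ℝ (pderivC j χ) Y := fun j =>
        ((contDiff_pderivC j hχ).differentiable (by simp)) Y
      have hd : HasFDerivAt (fun Y => (w.map θ).prod * χ Y
        + ε * ∑ j, b j * (-I * pderivC j χ Y) + ε ^ 2 * H ε Y)
          ((w.map θ).prod • fderiv ℝ χ Y + (ε : ℂ) • ∑ j, b j • (-I) • fderiv ℝ (pderivC j χ) Y
            + ((ε : ℂ) ^ 2) • fderiv ℝ (H ε) Y) Y := by
        refine ((hχd.hasFDerivAt.const_mul _).add (HasFDerivAt.const_mul ?_ _)).add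
          (hHd.hasFDerivAt.const_mul _)
        exact HasFDerivAt.fun_sum fun j _ => ((hpd j).hasFDerivAt.const_mul _).const_mul _
      have hpder : pderivC l (w.foldr (Mop θ ε) χ) Y = (w.map θ).prod * pderivC l χ Y
          + ε * ∑ j, b j * (-I * pderivC l (pderivC j χ) Y) + ε ^ 2 * pderivC l (H ε) Y := by
        rw [hf]
        conv_lhs => rw [pderivC, hd.fderiv]
        simp [pderivC]
      rw [List.foldr_cons, Mop, hpder, hexp, List.map_cons, List.prod_cons]
      simp only [add_mul, Finset.sum_add_distrib, ite_mul, zero_mul, Finset.sum_ite_eq',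
        Finset.mem_univ, if_true, mul_assoc]
      rw [← Finset.mul_sum]
      ring

/-- The test function. -/
noncomputable def testU {N : ℕ} (θ : Fin N → ℂ) (z₀ : Fin N → ℝ) (s : ℝ)
    (g : (Fin N → ℝ) → ℂ) : (Fin N → ℝ) → ℂ :=
  fun z => cexp (I * s ^ 2 * ∑ j, θ j * ((z j - z₀ j : ℝ) : ℂ)) * g (s • (z - z₀))

lemma pderivC_testU {N : ℕ} (θ : Fin N → ℂ) (z₀ : Fin N → ℝ) {s : ℝ} (hs : s ≠ 0)
    {g : (Fin N → ℝ) → ℂ} (hg : ContDiff ℝ (⊤ : ℕ∞) g) (c : ℂ) (l : Fin N) :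
    pderivC l (fun z => c * testU θ z₀ s g z) =
      fun z => c * (I * s ^ 2) * testU θ z₀ s (Mop θ s⁻¹ l g) z := by
  funext z
  have hgd : HasFDerivAt g (fderiv ℝ g (s • (z - z₀))) (s • (z - z₀)) :=
    ((hg.differentiable (by simp)) _).hasFDerivAt
  have h1 : HasFDerivAt (fun z : Fin N → ℝ => s • (z - z₀))
      (s • ContinuousLinearMap.id ℝ (Fin N → ℝ)) z :=
    ((hasFDerivAt_id z).sub_const z₀).const_smul s
  have h2 := hgd.comp z h1
  have h3 : HasFDerivAt (fun z : Fin N → ℝ => I * s ^ 2 * ∑ j, θ j * ((z j - z₀ j : ℝ) : ℂ))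
      ((I * (s : ℂ) ^ 2) • ∑ j, θ j •
        (ofRealCLM.comp (ContinuousLinearMap.proj (R := ℝ) (φ := fun _ : Fin N => ℝ) j))) z := by
    refine HasFDerivAt.const_mul (HasFDerivAt.fun_sum fun j _ => HasFDerivAt.const_mul ?_ _) _
    exact ofRealCLM.hasFDerivAt.comp z ((hasFDerivAt_apply j z).sub_const (z₀ j))
  have h4 := (h3.cexp.mul h2).const_mul c
  have h5 : HasFDerivAt (fun z => c * testU θ z₀ s g z) _ z := h4
  rw [pderivC, h5.fderiv]
  have hs' : (s : ℂ) ≠ 0 := by exact_mod_cast hs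
  simp [testU, Mop, pderivC, Pi.single_apply]
  have h6 : ∑ x, θ x * ((if x = l then (1 : ℝ) else 0 : ℝ) : ℂ) = θ l := by
    rw [Finset.sum_eq_single l] <;> simp +contextual
  rw [h6]
  field_simp
  ring_nf
  simp

lemma word_testU {N : ℕ} (θ : Fin N → ℂ) (z₀ : Fin N → ℝ) {s : ℝ} (hs : s ≠ 0)
    {χ : (Fin N → ℝ) → ℂ} (hχ : ContDiff ℝ (⊤ : ℕ∞) χ) (w : List (Fin N)) :
    w.foldr pderivC (testU θ z₀ s χ) =
      fun z => (I * s ^ 2) ^ w.length * testU θ z₀ s (w.foldr (Mop θ s⁻¹) χ) z := by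
  induction w with
  | nil => funext z; simp
  | cons l w ih =>
    rw [List.foldr_cons, ih, pderivC_testU θ z₀ hs
      (contDiff_slice (H := fun ε => w.foldr (Mop θ ε) χ) (contDiff_Mop_word θ hχ w) s⁻¹)]
    funext z
    simp [pow_succ]

lemma DopC_testU {N : ℕ} (θ : Fin N → ℂ) (z₀ : Fin N → ℝ) {s : ℝ} (hs : s ≠ 0)
    {χ : (Fin N → ℝ) → ℂ} (hχ : ContDiff ℝ (⊤ : ℕ∞) χ) (α : Fin N → ℕ) (z : Fin N → ℝ) :
    DopC α (testU θ z₀ s χ) z =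
      (s : ℂ) ^ (2 * ∑ j, α j) * testU θ z₀ s ((wordOf α).foldr (Mop θ s⁻¹) χ) z := by
  rw [DopC, mderivC_eq_word, word_testU θ z₀ hs hχ, length_word]
  rw [← mul_assoc, ← mul_pow, pow_mul]
  congr 2
  rw [← mul_assoc]; simp

lemma taylor_two {E F : Type*} [NormedAddCommGroup E] [NormedSpace ℝ E]
    [NormedAddCommGroup F] [NormedSpace ℝ F] {f : E → F} {x : E} (hf : ContDiffAt ℝ 2 f x) :
    ∃ K : ℝ, 0 ≤ K ∧ ∃ ρ > 0, ∀ z ∈ Metric.closedBall x ρ,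
      ‖f z - f x - fderiv ℝ f x (z - x)‖ ≤ K * ‖z - x‖ ^ 2 := by
  have h1 : ContDiffAt ℝ 1 (fderiv ℝ f) x := hf.fderiv_right (by norm_num)
  obtain ⟨K, t, ht, hK⟩ := h1.exists_lipschitzOnWith
  have hd : ∀ᶠ z in 𝓝 x, DifferentiableAt ℝ f z := by
    filter_upwards [hf.eventually (by simp)] with z hz using hz.differentiableAt (by simp)
  obtain ⟨ρ, hρ, hsub⟩ := Metric.nhds_basis_closedBall.mem_iff.1 (Filter.inter_mem ht hd)
  refine ⟨K, K.2, ρ, hρ, fun z hz => ?_⟩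
  have hb : Metric.closedBall x ‖z - x‖ ⊆ Metric.closedBall x ρ :=
    Metric.closedBall_subset_closedBall (by simpa [dist_eq_norm] using hz)
  have := (convex_closedBall x ‖z - x‖).norm_image_sub_le_of_norm_hasFDerivWithin_le'
    (f := f) (f' := fderiv ℝ f) (φ := fderiv ℝ f x) (C := K * ‖z - x‖) (x := x) (y := z)
    (fun y hy => (hsub (hb hy)).2.hasFDerivAt.hasFDerivWithinAt)
    (fun y hy => by
      have := hK.norm_sub_le (hsub (hb hy)).1 (mem_of_mem_nhds ht)
      refine this.trans ?_
      gcongr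
      simpa [dist_eq_norm] using hy)
    (by simp) (by simp [dist_eq_norm])
  refine this.trans (le_of_eq (by ring))

lemma lip_one {E F : Type*} [NormedAddCommGroup E] [NormedSpace ℝ E]
    [NormedAddCommGroup F] [NormedSpace ℝ F] {f : E → F} {x : E} (hf : ContDiffAt ℝ 1 f x) :
    ∃ K : ℝ, 0 ≤ K ∧ ∃ ρ > 0, ∀ z ∈ Metric.closedBall x ρ,
      ‖f z - f x‖ ≤ K * ‖z - x‖ := by
  obtain ⟨K, t, ht, hK⟩ := hf.exists_lipschitzOnWith
  obtain ⟨ρ, hρ, hsub⟩ := Metric.nhds_basis_closedBall.mem_iff.1 ht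
  exact ⟨K, K.2, ρ, hρ, fun z hz => hK.norm_sub_le (hsub hz) (mem_of_mem_nhds ht)⟩

lemma norm_compare {N : ℕ} (z₀ : Fin N → ℝ) {r A C c₁ c₂ : ℝ} (hr : 0 < r) (hA : 0 ≤ A)
    (hC : 0 ≤ C) (h1 : 0 ≤ c₁) (h2 : 0 ≤ c₂) (f g : (Fin N → ℝ) → ℂ)
    (hf : ∀ z ∈ Metric.ball z₀ r, c₁ ≤ ‖f z‖)
    (hg : ∀ z ∈ Metric.closedBall z₀ (2 * r), ‖g z‖ ≤ c₂)
    (hg0 : ∀ z ∉ Metric.closedBall z₀ (2 * r), g z = 0)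
    (h : ENNReal.ofReal A * eLpNorm f 2 volume ≤ ENNReal.ofReal C * eLpNorm g 2 volume) :
    A * c₁ ≤ C * c₂ * ((2 : ℝ) ^ N) ^ (1 / 2 : ℝ) := by
  have e1 : ENNReal.ofReal c₁ * ENNReal.ofReal ((2 * r) ^ N) ^ (1 / 2 : ℝ) ≤ eLpNorm f 2 volume := by
    have : eLpNorm ((Metric.ball z₀ r).indicator fun _ => c₁) 2 volume ≤ eLpNorm f 2 volume := by
      apply eLpNorm_mono
      intro z
      by_cases hz : z ∈ Metric.ball z₀ r
      · simpa [Set.indicator_of_mem hz, abs_of_nonneg h1] using hf z hz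
      · simp [Set.indicator_of_notMem hz]
    rw [eLpNorm_indicator_const measurableSet_ball (by simp) (by simp), Real.volume_pi_ball _ hr,
      Real.enorm_of_nonneg h1] at this
    simpa using this
  have e2 : eLpNorm g 2 volume ≤ ENNReal.ofReal c₂ * ENNReal.ofReal ((2 * (2 * r)) ^ N) ^ (1 / 2 : ℝ) := by
    have : eLpNorm g 2 volume ≤ eLpNorm ((Metric.closedBall z₀ (2 * r)).indicator fun _ => c₂) 2 volume := by
      apply eLpNorm_mono
      intro z
      by_cases hz : z ∈ Metric.closedBall z₀ (2 * r)
      · rw [Set.indicator_of_mem hz]; simpa [abs_of_nonneg h2] using hg z hz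
      · simp [hg0 z hz]
    rw [eLpNorm_indicator_const measurableSet_closedBall (by simp) (by simp),
      Real.volume_pi_closedBall _ (by positivity), Real.enorm_of_nonneg h2] at this
    simpa using this
  have e3 : ENNReal.ofReal A * (ENNReal.ofReal c₁ * ENNReal.ofReal ((2 * r) ^ N) ^ (1 / 2 : ℝ)) ≤
      ENNReal.ofReal C * (ENNReal.ofReal c₂ * ENNReal.ofReal ((2 * (2 * r)) ^ N) ^ (1 / 2 : ℝ)) :=
    (mul_le_mul_right e1 _).trans (h.trans (mul_le_mul_right e2 _))
  rw [ENNReal.ofReal_rpow_of_nonneg (by positivity) (by positivity),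
    ENNReal.ofReal_rpow_of_nonneg (by positivity) (by positivity),
    ← ENNReal.ofReal_mul h1, ← ENNReal.ofReal_mul h2, ← ENNReal.ofReal_mul hA,
    ← ENNReal.ofReal_mul hC, ENNReal.ofReal_le_ofReal_iff (by positivity), mul_pow 2 (2 * r),
    Real.mul_rpow (by positivity) (by positivity)] at e3
  have hp : 0 < ((2 * r) ^ N) ^ (1 / 2 : ℝ) := by positivity
  refine le_of_mul_le_mul_right ?_ hp
  calc _ = A * (c₁ * ((2 * r) ^ N) ^ (1 / 2 : ℝ)) := by ring
    _ ≤ _ := e3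
    _ = _ := by ring

open Asymptotics

lemma exists_chi (N : ℕ) : ∃ χ : (Fin N → ℝ) → ℂ, ContDiff ℝ (⊤ : ℕ∞) χ ∧
    (∀ Y, ‖Y‖ ≤ 1 → χ Y = 1) ∧ (∀ Y, 2 ≤ ‖Y‖ → χ Y = 0) := by
  let b : ContDiffBump (0 : Fin N → ℝ) := ⟨1, 2, by norm_num, by norm_num⟩
  refine ⟨fun Y => (b Y : ℂ), ofRealCLM.contDiff.comp b.contDiff, fun Y hY => ?_, fun Y hY => ?_⟩
  · have := b.one_of_mem_closedBall (x := Y) (by simpa [b] using hY)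
    simp [this]
  · have := b.zero_of_le_dist (x := Y) (by simpa [b] using hY)
    simp [this]

/-- Filter of pairs `(s, z)` with `s → ∞` and `‖z - z₀‖ ≤ 2 / s`. -/
def Lf {N : ℕ} (z₀ : Fin N → ℝ) : Filter (ℝ × (Fin N → ℝ)) :=
  (atTop ×ˢ ⊤) ⊓ 𝓟 {p | ‖p.2 - z₀‖ ≤ 2 * p.1⁻¹}

lemma eventually_Lf {N : ℕ} {z₀ : Fin N → ℝ} {P : ℝ × (Fin N → ℝ) → Prop} :
    (∀ᶠ p in Lf z₀, P p) ↔ ∀ᶠ s in atTop, ∀ z, ‖z - z₀‖ ≤ 2 * s⁻¹ → P (s, z) := by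
  rw [Lf, eventually_inf_principal, ← principal_univ, eventually_prod_principal_iff]
  simp

lemma Lf_fst {N : ℕ} (z₀ : Fin N → ℝ) : Tendsto Prod.fst (Lf z₀) atTop :=
  tendsto_fst.mono_left inf_le_left

lemma Lf_sub {N : ℕ} (z₀ : Fin N → ℝ) :
    (fun p : ℝ × (Fin N → ℝ) => p.2 - z₀) =O[Lf z₀] (fun p => p.1⁻¹) := by
  refine IsBigO.of_bound 2 ?_
  rw [eventually_Lf]
  filter_upwards [eventually_ge_atTop 1] with s hs z hz
  rw [Real.norm_of_nonneg (by positivity)]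
  exact hz

lemma Lf_snd {N : ℕ} (z₀ : Fin N → ℝ) : Tendsto Prod.snd (Lf z₀) (𝓝 z₀) := by
  have := (Lf_sub z₀).trans_tendsto (tendsto_inv_atTop_zero.comp (Lf_fst z₀))
  simpa using this.add_const z₀

lemma Lf_bdd {N : ℕ} (z₀ : Fin N → ℝ) {H : ℝ → (Fin N → ℝ) → ℂ}
    (hH : ContDiff ℝ (⊤ : ℕ∞) (fun p : ℝ × (Fin N → ℝ) => H p.1 p.2)) :
    (fun p : ℝ × (Fin N → ℝ) => H p.1⁻¹ (p.1 • (p.2 - z₀))) =O[Lf z₀] (fun _ => (1 : ℝ)) := by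
  have hK : IsCompact (Set.Icc (0 : ℝ) 1 ×ˢ Metric.closedBall (0 : Fin N → ℝ) 2) :=
    isCompact_Icc.prod (isCompact_closedBall _ _)
  obtain ⟨B, hB⟩ := hK.exists_bound_of_continuousOn hH.continuous.continuousOn
  refine IsBigO.of_bound B ?_
  rw [eventually_Lf]
  filter_upwards [eventually_ge_atTop 1] with s hs z hz
  have hs0 : 0 < s := by linarith
  have := hB (s⁻¹, s • (z - z₀)) ⟨⟨by positivity, inv_le_one_of_one_le₀ hs⟩, by
    rw [mem_closedBall_zero_iff, norm_smul, Real.norm_of_nonneg hs0.le]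
    calc s * ‖z - z₀‖ ≤ s * (2 * s⁻¹) := by gcongr
      _ = 2 := by field_simp⟩
  simpa using this

lemma Lf_taylor {N : ℕ} {F : Type*} [NormedAddCommGroup F] [NormedSpace ℝ F]
    (z₀ : Fin N → ℝ) {f : (Fin N → ℝ) → F} (hf : ContDiffAt ℝ 2 f z₀) :
    (fun p : ℝ × (Fin N → ℝ) => f p.2 - f z₀ - fderiv ℝ f z₀ (p.2 - z₀))
      =O[Lf z₀] (fun p => p.1⁻¹ ^ 2) := by
  obtain ⟨K, hK, ρ, hρ, h⟩ := taylor_two hf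
  have h1 : (fun z => f z - f z₀ - fderiv ℝ f z₀ (z - z₀)) =O[𝓝 z₀] (fun z => ‖z - z₀‖ ^ 2) := by
    refine IsBigO.of_bound K ?_
    filter_upwards [Metric.closedBall_mem_nhds z₀ hρ] with z hz
    simpa using h z hz
  exact (h1.comp_tendsto (Lf_snd z₀)).trans ((Lf_sub z₀).norm_left.pow 2)

lemma Lf_lip {N : ℕ} {F : Type*} [NormedAddCommGroup F] [NormedSpace ℝ F]
    (z₀ : Fin N → ℝ) {f : (Fin N → ℝ) → F} (hf : ContDiffAt ℝ 1 f z₀) :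
    (fun p : ℝ × (Fin N → ℝ) => f p.2 - f z₀) =O[Lf z₀] (fun p => p.1⁻¹) := by
  obtain ⟨K, hK, ρ, hρ, h⟩ := lip_one hf
  have h1 : (fun z => f z - f z₀) =O[𝓝 z₀] (fun z => z - z₀) := by
    refine IsBigO.of_bound K ?_
    filter_upwards [Metric.closedBall_mem_nhds z₀ hρ] with z hz
    simpa using h z hz
  exact (h1.comp_tendsto (Lf_snd z₀)).trans (Lf_sub z₀)

lemma Lf_coef {N : ℕ} (z₀ : Fin N → ℝ) {f : (Fin N → ℝ) → ℂ} (hf : ContinuousAt f z₀) :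
    (fun p : ℝ × (Fin N → ℝ) => f p.2) =O[Lf z₀] (fun _ => (1 : ℝ)) :=
  (hf.tendsto.comp (Lf_snd z₀)).isBigO_one ℝ

lemma eq_zero_of_partials {N : ℕ} {f : (Fin N → ℝ) → ℂ} {z₀ : Fin N → ℝ}
    (h : ∀ j : Fin N, fderiv ℝ f z₀ (Pi.single j 1) = 0) : fderiv ℝ f z₀ = 0 := by
  apply ContinuousLinearMap.coe_injective
  apply LinearMap.pi_ext'
  intro j
  ext
  simpa using h j

lemma symbol_bound {N m : ℕ} (hm : 1 ≤ m) (a : (Fin N → Fin (m + 1)) → (Fin N → ℝ) → ℂ)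
    (z₀ : Fin N → ℝ) (ha : ∀ α, ContDiffAt ℝ 2 (a α) z₀) (θ : Fin N → ℂ)
    (q : (Fin N → ℝ) → (Fin N → ℂ) → ℂ)
    (hq : ∀ z ζ, q z ζ =
      ∑ α ∈ Finset.univ.filter (fun α : Fin N → Fin (m + 1) => (∑ j, (α j : ℕ)) = m),
        a α z * ∏ j, ζ j ^ (α j : ℕ))
    (hqzero : q z₀ θ = 0)
    (hdz : ∀ j : Fin N, fderiv ℝ (fun z => q z θ) z₀ (Pi.single j 1) = 0)
    (hdζ : ∀ j : Fin N, deriv (fun t : ℂ => q z₀ (Function.update θ j t)) (θ j) = 0)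
    {χ : (Fin N → ℝ) → ℂ} (hχ : ContDiff ℝ (⊤ : ℕ∞) χ) :
    (fun p : ℝ × (Fin N → ℝ) =>
      ∑ α ∈ Finset.univ.filter (fun α : Fin N → Fin (m + 1) => (∑ j, (α j : ℕ)) ≤ m),
        a α p.2 * ((p.1 : ℂ) ^ (2 * ∑ j, (α j : ℕ)) *
          (wordOf (fun j => (α j : ℕ))).foldr (Mop θ p.1⁻¹) χ (p.1 • (p.2 - z₀))))
      =O[Lf z₀] (fun p => p.1 ^ (2 * (m - 1))) := by
  have hge : ∀ᶠ p in Lf z₀, 1 ≤ p.1 := (Lf_fst z₀).eventually_ge_atTop 1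
  have hc : (fun p : ℝ × (Fin N → ℝ) => (p.1 : ℂ)) =O[Lf z₀] (fun p => p.1) :=
    IsBigO.of_bound 1 (by simp)
  simp_rw [← Finset.sum_filter_add_sum_filter_not
    (Finset.univ.filter (fun α : Fin N → Fin (m + 1) => (∑ j, (α j : ℕ)) ≤ m))
    (fun α => (∑ j, (α j : ℕ)) = m), Finset.filter_filter]
  refine IsBigO.add ?_ ?_
  · have hfil : (Finset.univ.filter (fun α : Fin N → Fin (m + 1) =>
        (∑ j, (α j : ℕ)) ≤ m ∧ (∑ j, (α j : ℕ)) = m)) =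
        Finset.univ.filter (fun α : Fin N → Fin (m + 1) => (∑ j, (α j : ℕ)) = m) := by
      ext α; simp; omega
    rw [hfil]
    set S := Finset.univ.filter (fun α : Fin N → Fin (m + 1) => (∑ j, (α j : ℕ)) = m) with hS
    choose b H hb hH hexp using fun α : Fin N → Fin (m + 1) =>
      Mop_word_expand θ hχ (wordOf (fun j => (α j : ℕ)))
    have hqc : ContDiffAt ℝ 2 (fun z => q z θ) z₀ := by
      simp_rw [hq]
      exact ContDiffAt.sum fun α _ => (ha α).mul contDiffAt_const
    have h1 : (fun p : ℝ × (Fin N → ℝ) => q p.2 θ) =O[Lf z₀] (fun p => p.1⁻¹ ^ 2) := by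
      have := Lf_taylor z₀ hqc
      rw [eq_zero_of_partials hdz] at this
      simpa [hqzero] using this
    have hcz : ∀ j, ∑ α ∈ S, a α z₀ * b α j = 0 := by
      intro j
      rw [← hdζ j]
      symm
      simp_rw [hq]
      refine HasDerivAt.deriv (HasDerivAt.fun_sum fun α _ => HasDerivAt.const_mul _ ?_)
      have := hb α j
      simpa only [prod_word] using this
    have h2 : ∀ j, (fun p : ℝ × (Fin N → ℝ) => ∑ α ∈ S, a α p.2 * b α j)
        =O[Lf z₀] (fun p => p.1⁻¹) := by
      intro j
      have hcd : ContDiffAt ℝ 1 (fun z => ∑ α ∈ S, a α z * b α j) z₀ :=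
        ContDiffAt.sum fun α _ => ((ha α).of_le (by norm_num)).mul contDiffAt_const
      simpa [hcz j] using Lf_lip z₀ hcd
    have hci : (fun p : ℝ × (Fin N → ℝ) => ((p.1⁻¹ : ℝ) : ℂ)) =O[Lf z₀] (fun p => p.1⁻¹) :=
      IsBigO.of_bound 1 (by simp)
    have hχb : (fun p : ℝ × (Fin N → ℝ) => χ (p.1 • (p.2 - z₀))) =O[Lf z₀] (fun _ => (1 : ℝ)) :=
      Lf_bdd z₀ (H := fun _ => χ) (hχ.comp contDiff_snd)
    have hχb' : ∀ j, (fun p : ℝ × (Fin N → ℝ) => -I * pderivC j χ (p.1 • (p.2 - z₀)))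
        =O[Lf z₀] (fun _ => (1 : ℝ)) := fun j =>
      Lf_bdd z₀ (H := fun _ Y => -I * pderivC j χ Y)
        (contDiff_const.mul ((contDiff_pderivC j hχ).comp contDiff_snd))
    have t1 : (fun p : ℝ × (Fin N → ℝ) => q p.2 θ * χ (p.1 • (p.2 - z₀)))
        =O[Lf z₀] (fun p => p.1⁻¹ ^ 2) := by simpa using h1.mul hχb
    have t2 : (fun p : ℝ × (Fin N → ℝ) => ((p.1⁻¹ : ℝ) : ℂ) * ∑ j, (∑ α ∈ S, a α p.2 * b α j) *
        (-I * pderivC j χ (p.1 • (p.2 - z₀)))) =O[Lf z₀] (fun p => p.1⁻¹ ^ 2) := by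
      have : (fun p : ℝ × (Fin N → ℝ) => ∑ j, (∑ α ∈ S, a α p.2 * b α j) *
        (-I * pderivC j χ (p.1 • (p.2 - z₀)))) =O[Lf z₀] (fun p => p.1⁻¹) :=
        IsBigO.fun_sum fun j _ => by simpa using (h2 j).mul (hχb' j)
      simpa only [pow_two] using hci.mul this
    have t3 : (fun p : ℝ × (Fin N → ℝ) => ((p.1⁻¹ : ℝ) : ℂ) ^ 2 *
        ∑ α ∈ S, a α p.2 * H α p.1⁻¹ (p.1 • (p.2 - z₀))) =O[Lf z₀] (fun p => p.1⁻¹ ^ 2) := by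
      have : (fun p : ℝ × (Fin N → ℝ) => ∑ α ∈ S, a α p.2 * H α p.1⁻¹ (p.1 • (p.2 - z₀)))
        =O[Lf z₀] (fun _ => (1 : ℝ)) :=
        IsBigO.fun_sum fun α _ => by
          simpa using (Lf_coef z₀ (ha α).continuousAt).mul (Lf_bdd z₀ (hH α))
      simpa using (hci.pow 2).mul this
    have t4 := (hc.pow (2 * m)).mul ((t1.add t2).add t3)
    refine (t4.congr_left ?_).trans (IsBigO.of_bound 1 ?_)
    · intro p
      have hterm : ∀ α ∈ S, a α p.2 * ((p.1 : ℂ) ^ (2 * ∑ j, (α j : ℕ)) *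
          (wordOf (fun j => (α j : ℕ))).foldr (Mop θ p.1⁻¹) χ (p.1 • (p.2 - z₀))) =
          (p.1 : ℂ) ^ (2 * m) * ((a α p.2 * ∏ j, θ j ^ (α j : ℕ)) * χ (p.1 • (p.2 - z₀)) +
            ((p.1⁻¹ : ℝ) : ℂ) * (∑ j, (a α p.2 * b α j) *
              (-I * pderivC j χ (p.1 • (p.2 - z₀)))) +
            ((p.1⁻¹ : ℝ) : ℂ) ^ 2 * (a α p.2 * H α p.1⁻¹ (p.1 • (p.2 - z₀)))) := by
        intro α hα
        have hα' : ∑ j, (α j : ℕ) = m := by simpa [hS] using hα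
        rw [hexp, prod_word, hα']
        simp_rw [mul_assoc (a α p.2) (b α _), ← Finset.mul_sum]
        ring
      rw [Finset.sum_congr rfl hterm, ← Finset.mul_sum, Finset.sum_add_distrib,
        Finset.sum_add_distrib, ← Finset.mul_sum, ← Finset.mul_sum, ← Finset.sum_mul, hq,
        Finset.sum_comm]
      simp_rw [Finset.sum_mul]
    · filter_upwards [hge] with p hp
      have hp0 : 0 < p.1 := by linarith
      rw [one_mul]
      apply le_of_eq
      congr 1
      obtain ⟨k, rfl⟩ : ∃ k, m = k + 1 := ⟨m - 1, by omega⟩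
      simp only [Nat.add_sub_cancel, mul_add, pow_add]
      field_simp
  · refine IsBigO.fun_sum fun α hα => ?_
    have hα' : ∑ j, (α j : ℕ) ≤ m - 1 := by
      simp only [Finset.mem_filter] at hα; omega
    have h1 := (Lf_coef z₀ (ha α).continuousAt).mul ((hc.pow (2 * ∑ j, (α j : ℕ))).mul
      (Lf_bdd z₀ (H := fun ε => (wordOf (fun j => (α j : ℕ))).foldr (Mop θ ε) χ)
        (contDiff_Mop_word θ hχ _)))
    refine h1.trans (IsBigO.of_bound 1 ?_)
    filter_upwards [hge] with p hp
    have hp0 : 0 < p.1 := by linarith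
    rw [Real.norm_of_nonneg (by positivity), Real.norm_of_nonneg (by positivity)]
    simp only [one_mul, mul_one]
    exact pow_le_pow_right₀ hp (by omega)

lemma exp_norm {N : ℕ} (φ : (Fin N → ℝ) → ℝ) (z₀ ζ₀ : Fin N → ℝ) (τ₀ : ℝ) (θ₀ : Fin N → ℂ)
    (hθ₀ : θ₀ = fun j => (ζ₀ j : ℂ) +
      (τ₀ : ℂ) * Complex.I * ((fderiv ℝ φ z₀ (Pi.single j 1) : ℝ) : ℂ)) (s : ℝ) (z : Fin N → ℝ) :
    ‖(Real.exp (τ₀ * s ^ 2 * φ z) : ℂ) *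
      cexp (I * s ^ 2 * ∑ j, θ₀ j * ((z j - z₀ j : ℝ) : ℂ))‖ =
    Real.exp (τ₀ * s ^ 2 * φ z₀) *
      Real.exp (τ₀ * s ^ 2 * (φ z - φ z₀ - fderiv ℝ φ z₀ (z - z₀))) := by
  have hsum : fderiv ℝ φ z₀ (z - z₀) = ∑ j, (z j - z₀ j) * fderiv ℝ φ z₀ (Pi.single j 1) := by
    conv_lhs => rw [pi_eq_sum_univ' (z - z₀)]
    rw [map_sum]
    refine Finset.sum_congr rfl fun j _ => ?_
    rw [map_smul]
    simp only [Pi.sub_apply, smul_eq_mul]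
  have him : (∑ j, θ₀ j * ((z j - z₀ j : ℝ) : ℂ)).im = τ₀ * fderiv ℝ φ z₀ (z - z₀) := by
    rw [hsum, Complex.im_sum, Finset.mul_sum]
    refine Finset.sum_congr rfl fun j _ => ?_
    rw [hθ₀, Complex.im_mul_ofReal]
    simp
    ring
  have hre : (I * s ^ 2 * ∑ j, θ₀ j * ((z j - z₀ j : ℝ) : ℂ)).re =
      -(s ^ 2 * (τ₀ * fderiv ℝ φ z₀ (z - z₀))) := by
    rw [← him]
    have : (I * (s : ℂ) ^ 2) = I * ((s ^ 2 : ℝ) : ℂ) := by push_cast; ring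
    rw [this, mul_assoc, Complex.I_mul_re, Complex.im_ofReal_mul]
  rw [norm_mul, Complex.norm_exp, hre, Complex.norm_real, Real.norm_of_nonneg (Real.exp_pos _).le,
    ← Real.exp_add, ← Real.exp_add]
  congr 1
  ring

lemma testU_contDiff {N : ℕ} (θ : Fin N → ℂ) (z₀ : Fin N → ℝ) (s : ℝ)
    {χ : (Fin N → ℝ) → ℂ} (hχ : ContDiff ℝ (⊤ : ℕ∞) χ) :
    ContDiff ℝ (⊤ : ℕ∞) (testU θ z₀ s χ) := by
  unfold testU
  refine ContDiff.mul (ContDiff.cexp (contDiff_const.mul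
    (ContDiff.sum fun j _ => contDiff_const.mul ?_))) (hχ.comp
      ((contDiff_id.sub contDiff_const).const_smul s))
  exact ofRealCLM.contDiff.comp ((contDiff_apply ℝ ℝ j).sub contDiff_const)

lemma final_arith {m k : ℕ} {s τ₀ δ : ℝ} (hs : 0 < s) (hτ₀ : 0 < τ₀) (hm : 1 ≤ m) :
    (τ₀ * s ^ 2) ^ ((m : ℝ) - 1 - (k : ℝ) + δ) * s ^ (2 * k) =
      τ₀ ^ ((m : ℝ) - 1 - (k : ℝ) + δ) * s ^ (2 * δ) * s ^ (2 * (m - 1)) := by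
  rw [Real.mul_rpow hτ₀.le (by positivity), ← Real.rpow_natCast s 2, ← Real.rpow_mul hs.le,
    ← Real.rpow_natCast s (2 * k), ← Real.rpow_natCast s (2 * (m - 1)), mul_assoc, mul_assoc,
    ← Real.rpow_add hs, ← Real.rpow_add hs]
  congr 2
  push_cast [Nat.cast_sub hm]
  ring

end

open Complex Filter Topology Asymptotics in

/-- If the conjugated principal symbol `q(z, ζ + iτ∇φ(z))` vanishes to second order at a point
with `θ₀^{α₀} ≠ 0`, then a Carleman estimate of the given form forces `δ = 0`. -/
theorem stmt0 (N m : ℕ) (hN : 1 ≤ N) (hm : 1 ≤ m)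
    (Z : Set (Fin N → ℝ)) (hZopen : IsOpen Z)
    -- coefficients of Q, indexed by multi-indices α with entries ≤ m (covering all |α| ≤ m)
    (a : (Fin N → Fin (m + 1)) → (Fin N → ℝ) → ℂ)
    (ha : ∀ α, ContDiffOn ℝ (⊤ : ℕ∞) (a α) Z)
    (φ : (Fin N → ℝ) → ℝ) (hφ : ContDiffOn ℝ (⊤ : ℕ∞) φ Z)
    -- the operator Q u = ∑_{|α| ≤ m} a_α D^α u
    (Q : ((Fin N → ℝ) → ℂ) → ((Fin N → ℝ) → ℂ))
    (hQ : ∀ u z, Q u z =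
      ∑ α ∈ Finset.univ.filter (fun α : Fin N → Fin (m + 1) => (∑ j, (α j : ℕ)) ≤ m),
        a α z * DopC (fun j => (α j : ℕ)) u z)
    -- the principal symbol q(z,ζ) = ∑_{|α| = m} a_α(z) ζ^α, ζ ∈ ℂ^N
    (q : (Fin N → ℝ) → (Fin N → ℂ) → ℂ)
    (hq : ∀ z ζ, q z ζ =
      ∑ α ∈ Finset.univ.filter (fun α : Fin N → Fin (m + 1) => (∑ j, (α j : ℕ)) = m),
        a α z * ∏ j, ζ j ^ (α j : ℕ))
    (C τ₁ : ℝ) (hC : 0 < C) (hτ₁ : 0 < τ₁)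
    (α₀ : Fin N → Fin (m + 1)) (hα₀ : (∑ j, (α₀ j : ℕ)) ≤ m)
    (δ : ℝ) (hδ : 0 ≤ δ)
    -- the Carleman estimate
    (hcarl : ∀ τ : ℝ, τ₁ ≤ τ → ∀ u : (Fin N → ℝ) → ℂ,
      ContDiff ℝ (⊤ : ℕ∞) u → HasCompactSupport u → tsupport u ⊆ Z →
      ENNReal.ofReal (τ ^ ((m : ℝ) - 1 - ((∑ j, (α₀ j : ℕ) : ℕ) : ℝ) + δ)) *
          eLpNorm (fun z => (Real.exp (τ * φ z) : ℂ) *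
            DopC (fun j => (α₀ j : ℕ)) u z) 2 volume
        ≤ ENNReal.ofReal C *
          eLpNorm (fun z => (Real.exp (τ * φ z) : ℂ) * Q u z) 2 volume)
    -- the degenerate characteristic point
    (z₀ : Fin N → ℝ) (hz₀ : z₀ ∈ Z) (ζ₀ : Fin N → ℝ) (τ₀ : ℝ) (hτ₀ : 0 < τ₀)
    (θ₀ : Fin N → ℂ)
    (hθ₀ : θ₀ = fun j => (ζ₀ j : ℂ) +
      (τ₀ : ℂ) * Complex.I * ((fderiv ℝ φ z₀ (Pi.single j 1) : ℝ) : ℂ))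
    (hθ₀ne : (∏ j, θ₀ j ^ (α₀ j : ℕ)) ≠ 0)
    (hqzero : q z₀ θ₀ = 0)
    (hdz : ∀ j : Fin N, fderiv ℝ (fun z => q z θ₀) z₀ (Pi.single j 1) = 0)
    (hdζ : ∀ j : Fin N, deriv (fun t : ℂ => q z₀ (Function.update θ₀ j t)) (θ₀ j) = 0) :
    δ = 0 := by

  classical
  have hZn : Z ∈ 𝓝 z₀ := hZopen.mem_nhds hz₀
  have ha2 : ∀ α, ContDiffAt ℝ 2 (a α) z₀ := fun α =>
    ((ha α).contDiffAt hZn).of_le (WithTop.coe_le_coe.2 (le_top : (2 : ℕ∞) ≤ ⊤))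
  have hφ2 : ContDiffAt ℝ 2 φ z₀ := (hφ.contDiffAt hZn).of_le (WithTop.coe_le_coe.2 (le_top : (2 : ℕ∞) ≤ ⊤))
  obtain ⟨χ, hχ, hχ1, hχ0⟩ := exists_chi N
  obtain ⟨M, hM0, hM⟩ :=
    (symbol_bound hm a z₀ ha2 θ₀ q hq hqzero hdz hdζ hχ).exists_pos
  obtain ⟨K, hK0, hK⟩ := (Lf_taylor z₀ hφ2).exists_pos
  rw [IsBigOWith, eventually_Lf] at hM hK
  have hZL : ∀ᶠ p in Lf z₀, p.2 ∈ Z := (Lf_snd z₀).eventually hZn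
  rw [eventually_Lf] at hZL
  by_contra hδ0
  have hδpos : 0 < δ := lt_of_le_of_ne hδ (Ne.symm hδ0)
  set k : ℕ := ∑ j, (α₀ j : ℕ) with hk
  set P : ℝ := ‖∏ j, θ₀ j ^ (α₀ j : ℕ)‖ with hP
  have hPpos : 0 < P := norm_pos_iff.2 hθ₀ne
  set κ : ℝ := ((2 : ℝ) ^ N) ^ (1 / 2 : ℝ) with hκ
  set T : ℝ := τ₀ ^ ((m : ℝ) - 1 - (k : ℝ) + δ) with hT
  have hTpos : 0 < T := Real.rpow_pos_of_pos hτ₀ _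
  have hlarge : ∀ᶠ s : ℝ in atTop,
      C * (Real.exp (τ₀ * K) * M) * κ / (T * Real.exp (-(τ₀ * K)) * P) < s ^ (2 * δ) :=
    (tendsto_rpow_atTop (by positivity)).eventually_gt_atTop _
  have hτl : ∀ᶠ s : ℝ in atTop, τ₁ ≤ τ₀ * s ^ 2 :=
    ((tendsto_pow_atTop (two_ne_zero)).const_mul_atTop hτ₀).eventually_ge_atTop _
  obtain ⟨s, hs1, hMs, hKs, hZs, hls, hτs⟩ := ((eventually_ge_atTop (1 : ℝ)).and
    (hM.and (hK.and (hZL.and (hlarge.and hτl))))).exists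
  have hs : 0 < s := by linarith
  have hYn : ∀ z, ‖s • (z - z₀)‖ = s * ‖z - z₀‖ := fun z => by
    rw [norm_smul, Real.norm_of_nonneg hs.le]
  -- the weight bounds
  have hrem : ∀ z, ‖z - z₀‖ ≤ 2 * s⁻¹ →
      |τ₀ * s ^ 2 * (φ z - φ z₀ - fderiv ℝ φ z₀ (z - z₀))| ≤ τ₀ * K := by
    intro z hz
    have h := hKs z hz
    simp only [norm_pow, norm_inv, Real.norm_of_nonneg hs.le] at h
    rw [abs_mul, abs_of_nonneg (by positivity : 0 ≤ τ₀ * s ^ 2)]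
    calc _ ≤ τ₀ * s ^ 2 * (K * s⁻¹ ^ 2) := by gcongr; exact h
      _ = τ₀ * K := by field_simp
  set u := testU θ₀ z₀ s χ with hu
  have hsupp : Function.support u ⊆ Metric.closedBall z₀ (2 * s⁻¹) := by
    intro z hz
    by_contra hzn
    apply hz
    rw [Metric.mem_closedBall, dist_eq_norm, not_le] at hzn
    have : χ (s • (z - z₀)) = 0 := by
      apply hχ0
      rw [hYn]
      calc 2 = s * (2 * s⁻¹) := by field_simp
        _ ≤ _ := by gcongr
    simp [hu, testU, this]
  have hts : tsupport u ⊆ Metric.closedBall z₀ (2 * s⁻¹) :=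
    closure_minimal hsupp Metric.isClosed_closedBall
  have hcs : HasCompactSupport u :=
    (isCompact_closedBall z₀ (2 * s⁻¹)).of_isClosed_subset (isClosed_tsupport u) hts
  have hmain := hcarl (τ₀ * s ^ 2) hτs u (testU_contDiff θ₀ z₀ s hχ) hcs (fun z hz =>
    hZs z (by simpa [dist_eq_norm] using hts hz))
  have hQu : ∀ z, (Real.exp (τ₀ * s ^ 2 * φ z) : ℂ) * Q u z =
      ((Real.exp (τ₀ * s ^ 2 * φ z) : ℂ) *
        cexp (I * s ^ 2 * ∑ j, θ₀ j * ((z j - z₀ j : ℝ) : ℂ))) *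
      ∑ α ∈ Finset.univ.filter (fun α : Fin N → Fin (m + 1) => (∑ j, (α j : ℕ)) ≤ m),
        a α z * ((s : ℂ) ^ (2 * ∑ j, (α j : ℕ)) *
          (wordOf (fun j => (α j : ℕ))).foldr (Mop θ₀ s⁻¹) χ (s • (z - z₀))) := by
    intro z
    rw [hQ, mul_assoc (Real.exp (τ₀ * s ^ 2 * φ z) : ℂ)]
    congr 1
    rw [Finset.mul_sum (Finset.univ.filter (fun α : Fin N → Fin (m + 1) => (∑ j, (α j : ℕ)) ≤ m))]
    refine Finset.sum_congr rfl fun α _ => ?_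
    rw [hu, DopC_testU θ₀ z₀ hs.ne' hχ, testU]
    ring
  have hcmp := norm_compare z₀ (r := s⁻¹) (A := (τ₀ * s ^ 2) ^ ((m : ℝ) - 1 - (k : ℝ) + δ))
    (C := C) (c₁ := Real.exp (τ₀ * s ^ 2 * φ z₀) * Real.exp (-(τ₀ * K)) * (s ^ (2 * k) * P))
    (c₂ := Real.exp (τ₀ * s ^ 2 * φ z₀) * Real.exp (τ₀ * K) * (M * s ^ (2 * (m - 1))))
    (by positivity) (by positivity) hC.le (by positivity) (by positivity) _ _ ?_ ?_ ?_ hmain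
  · have hE := Real.exp_pos (τ₀ * s ^ 2 * φ z₀)
    have hfa := final_arith (m := m) (k := k) (δ := δ) hs hτ₀ hm
    rw [← hT] at hfa
    rw [div_lt_iff₀ (by positivity)] at hls
    have hpos : 0 < Real.exp (τ₀ * s ^ 2 * φ z₀) * s ^ (2 * (m - 1)) := by positivity
    have := mul_lt_mul_of_pos_right hls hpos
    refine absurd hcmp (not_le.2 ?_)
    calc _ = C * (Real.exp (τ₀ * K) * M) * κ *
          (Real.exp (τ₀ * s ^ 2 * φ z₀) * s ^ (2 * (m - 1))) := by ring
      _ < _ := this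
      _ = (T * s ^ (2 * δ) * s ^ (2 * (m - 1))) *
          (Real.exp (τ₀ * s ^ 2 * φ z₀) * Real.exp (-(τ₀ * K)) * P) := by ring
      _ = _ := by rw [← hfa]; ring
  · intro z hz
    rw [Metric.mem_ball, dist_eq_norm] at hz
    have hz2 : ‖z - z₀‖ ≤ 2 * s⁻¹ := by
      have : 0 < s⁻¹ := by positivity
      linarith
    have hloc : χ =ᶠ[𝓝 (s • (z - z₀))] fun _ => 1 := by
      have hmem : Metric.ball (0 : Fin N → ℝ) 1 ∈ 𝓝 (s • (z - z₀)) := by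
        refine Metric.isOpen_ball.mem_nhds ?_
        rw [mem_ball_zero_iff, hYn]
        calc s * ‖z - z₀‖ < s * s⁻¹ := by gcongr
          _ = 1 := by field_simp
      filter_upwards [hmem] with Y hY
      exact hχ1 Y (mem_ball_zero_iff.1 hY).le
    have hval := (Mop_word_const θ₀ s⁻¹ hloc (wordOf (fun j => (α₀ j : ℕ)))).self_of_nhds
    rw [prod_word, mul_one] at hval
    have heq : (Real.exp (τ₀ * s ^ 2 * φ z) : ℂ) * DopC (fun j => (α₀ j : ℕ)) u z =
        ((Real.exp (τ₀ * s ^ 2 * φ z) : ℂ) *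
          cexp (I * s ^ 2 * ∑ j, θ₀ j * ((z j - z₀ j : ℝ) : ℂ))) *
        ((s : ℂ) ^ (2 * k) * ∏ j, θ₀ j ^ (α₀ j : ℕ)) := by
      rw [hu, DopC_testU θ₀ z₀ hs.ne' hχ, testU, hval]
      ring
    rw [heq, norm_mul, exp_norm φ z₀ ζ₀ τ₀ θ₀ hθ₀, norm_mul, norm_pow, Complex.norm_real,
      Real.norm_of_nonneg hs.le, ← hP]
    gcongr
    exact (abs_le.1 (hrem z hz2)).1
  · intro z hz
    rw [Metric.mem_closedBall, dist_eq_norm] at hz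
    rw [hQu, norm_mul, exp_norm φ z₀ ζ₀ τ₀ θ₀ hθ₀]
    have h := hMs z hz
    rw [Real.norm_of_nonneg (by positivity)] at h
    have h2 := (abs_le.1 (hrem z hz)).2
    gcongr
  · intro z hz
    rw [Metric.mem_closedBall, dist_eq_norm, not_le] at hz
    have hloc : χ =ᶠ[𝓝 (s • (z - z₀))] fun _ => 0 := by
      have hmem : {Y : Fin N → ℝ | 2 < ‖Y‖} ∈ 𝓝 (s • (z - z₀)) := by
        refine (isOpen_lt continuous_const continuous_norm).mem_nhds ?_
        show 2 < ‖s • (z - z₀)‖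
        rw [hYn]
        calc 2 = s * (2 * s⁻¹) := by field_simp
          _ < _ := by gcongr
      filter_upwards [hmem] with Y hY
      exact hχ0 Y (le_of_lt hY)
    rw [hQu]
    refine mul_eq_zero_of_right _ (Finset.sum_eq_zero fun α _ => ?_)
    rw [(Mop_word_const θ₀ s⁻¹ hloc _).self_of_nhds]
    simp
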